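/- Let Ω = (a₁,b₁)×(a₂,b₂) be an open rectangle in ℝ² and let φ₁,…,φ_M : ℝ² → ℝ² be finitely many vector fields, each continuously differentiable on a neighborhood of the closure of Ω and each satisfying the boundary condition φ·n = 0 on ∂Ω. Then there exists r > 0 such that for every coefficient vector a ∈ ℝ^M with Euclidean norm ‖a‖₂ ≤ r, the map Φ_a = id + Σ_{m=1}^M a_m φ_m is a bijection from the closure of Ω onto the closure of Ω. -/

import Mathlib

/-!
On the compact box each field is Lipschitz, so for small `a` the perturbation
`g = ∑ m, a m • φ m` is Lipschitz on the box with constant `c < 1`. Composing with the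
coordinatewise clamp `P` onto the box, which is `1`-Lipschitz, makes `g ∘ P` a contraction of the
whole space, so `id + g ∘ P` is a bijection of the whole space by Banach's fixed point theorem, and
it agrees with `id + g` on the box. Tangency shows that this bijection maps the box into itself and
that no point outside the box is sent into it: if `x` lies beyond a face orthogonal to the `i`-th
axis, then `P x` is on that face, so the `i`-th coordinate of `x` is unchanged.
-/

open Set
open scoped NNReal

theorem lipschitzOnWith_sum {α E κ : Type*} [PseudoEMetricSpace α] [SeminormedAddCommGroup E]
    {s : Set α} {f : κ → α → E} {L : κ → ℝ≥0} (t : Finset κ)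
    (hf : ∀ k ∈ t, LipschitzOnWith (L k) (f k) s) :
    LipschitzOnWith (∑ k ∈ t, L k) (fun x => ∑ k ∈ t, f k x) s := by
  classical
  induction t using Finset.induction_on with
  | empty => simpa only [Finset.sum_empty] using (LipschitzWith.const (0 : E)).lipschitzOnWith
  | insert k t hk ih =>
    simp only [Finset.sum_insert hk]
    exact (hf k (t.mem_insert_self k)).add (ih fun j hj => hf j (Finset.mem_insert_of_mem hj))

theorem bijective_add_of_contractingWith {E : Type*} [NormedAddCommGroup E] [CompleteSpace E]
    {c : ℝ≥0} {h : E → E} (hh : ContractingWith c h) : Function.Bijective fun x => x + h x := by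
  refine (Function.bijective_iff_existsUnique _).2 fun y => ?_
  have hT : ContractingWith c fun x => y - h x :=
    ⟨hh.1, by simpa only [zero_add] using (LipschitzWith.const y).sub hh.2⟩
  have solution_iff (x : E) : x + h x = y ↔ Function.IsFixedPt (fun x => y - h x) x :=
    eq_sub_iff_add_eq.symm.trans eq_comm
  simp only [solution_iff]
  exact ⟨_, hT.fixedPoint_isFixedPt, fun x hx => hT.fixedPoint_unique hx⟩

section Box

variable {ι : Type*}

/-- The closed coordinate box with lower corner `a` and upper corner `b`, the closure of the domain
`Ω`; it is empty unless `a ≤ b`. -/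
def closedBox (a b : ι → ℝ) : Set (EuclideanSpace ℝ ι) :=
  {x | ∀ i, x i ∈ Icc (a i) (b i)}

/-- Coordinatewise projection onto `closedBox a b`, used to extend fields from the box to the whole
space. It takes values in the box when `a ≤ b`. -/
noncomputable def boxClamp (a b : ι → ℝ) (x : EuclideanSpace ℝ ι) : EuclideanSpace ℝ ι :=
  WithLp.toLp 2 fun i => max (a i) (min (b i) (x i))

/-- The boundary condition `g · n = 0` on the boundary of `closedBox a b`: as the normals are the
coordinate directions, the `i`-th component vanishes on the two faces orthogonal to the `i`-th
axis. -/
def IsTangentToBox (a b : ι → ℝ) (g : EuclideanSpace ℝ ι → EuclideanSpace ℝ ι) : Prop :=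
  ∀ i, ∀ x ∈ closedBox a b, x i = a i ∨ x i = b i → g x i = 0

variable {a b : ι → ℝ} {x : EuclideanSpace ℝ ι} {g : EuclideanSpace ℝ ι → EuclideanSpace ℝ ι}

theorem convex_closedBox (a b : ι → ℝ) : Convex ℝ (closedBox a b) :=
  fun _ hx _ hy _ _ hs ht hst i => convex_Icc (a i) (b i) (hx i) (hy i) hs ht hst

theorem setOf_forall_mem_eq_preimage_pi (s : ι → Set ℝ) :
    {x : EuclideanSpace ℝ ι | ∀ i, x i ∈ s i} =
      PiLp.homeomorph 2 (fun _ : ι => ℝ) ⁻¹' univ.pi s := by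
  ext x
  simp only [mem_preimage, mem_univ_pi]
  rfl

theorem isCompact_closedBox (a b : ι → ℝ) : IsCompact (closedBox a b) := by
  rw [closedBox, setOf_forall_mem_eq_preimage_pi, Homeomorph.isCompact_preimage]
  exact isCompact_univ_pi fun i => isCompact_Icc

theorem closure_setOf_forall_mem_Ioo (hab : ∀ i, a i ≠ b i) :
    closure {x : EuclideanSpace ℝ ι | ∀ i, x i ∈ Ioo (a i) (b i)} = closedBox a b := by
  rw [closedBox, setOf_forall_mem_eq_preimage_pi, setOf_forall_mem_eq_preimage_pi,
    ← Homeomorph.preimage_closure, closure_pi_set]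
  simp only [closure_Ioo (hab _)]

theorem boxClamp_mem_closedBox (hab : a ≤ b) (x : EuclideanSpace ℝ ι) :
    boxClamp a b x ∈ closedBox a b :=
  fun i => ⟨le_max_left _ _, max_le (hab i) (min_le_left _ _)⟩

theorem boxClamp_apply_of_le_left {i : ι} (hx : x i ≤ a i) : boxClamp a b x i = a i :=
  max_eq_left ((min_le_right _ _).trans hx)

theorem boxClamp_apply_of_right_le {i : ι} (hab : a i ≤ b i) (hx : b i ≤ x i) :
    boxClamp a b x i = b i := by
  simp only [boxClamp, min_eq_left hx, max_eq_right hab]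

theorem boxClamp_eq_self (hx : x ∈ closedBox a b) : boxClamp a b x = x := by
  ext i
  simp only [boxClamp, min_eq_right (hx i).2, max_eq_right (hx i).1]

theorem le_of_mem_closedBox (hx : x ∈ closedBox a b) : a ≤ b :=
  fun i => (hx i).1.trans (hx i).2

namespace IsTangentToBox

theorem sum_smul {κ : Type*} [Fintype κ] {φ : κ → EuclideanSpace ℝ ι → EuclideanSpace ℝ ι}
    (hφ : ∀ m, IsTangentToBox a b (φ m)) (u : κ → ℝ) :
    IsTangentToBox a b fun x => ∑ m, u m • φ m x := by
  intro i x hx hface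
  simp only [WithLp.ofLp_sum, WithLp.ofLp_smul, Finset.sum_apply, Pi.smul_apply,
    hφ _ i x hx hface, smul_zero, Finset.sum_const_zero]

theorem mem_closedBox_of_add_boxClamp_mem (hg : IsTangentToBox a b g)
    (hx : x + g (boxClamp a b x) ∈ closedBox a b) : x ∈ closedBox a b := by
  intro i
  have hab := le_of_mem_closedBox hx
  have unmoved (hface : boxClamp a b x i = a i ∨ boxClamp a b x i = b i) :
      x i ∈ Icc (a i) (b i) := by
    simpa only [PiLp.add_apply, hg i _ (boxClamp_mem_closedBox hab x) hface, add_zero] using hx i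
  by_contra hout
  rcases lt_or_ge (x i) (a i) with hlt | hge
  · exact hout (unmoved (.inl (boxClamp_apply_of_le_left hlt.le)))
  · have hgt : b i < x i := lt_of_not_ge fun hle => hout ⟨hge, hle⟩
    exact hout (unmoved (.inr (boxClamp_apply_of_right_le (hab i) hgt.le)))

end IsTangentToBox

variable [Fintype ι]

theorem lipschitzWith_boxClamp (a b : ι → ℝ) : LipschitzWith 1 (boxClamp a b) := by
  refine LipschitzWith.mk_one fun x y => ?_
  rw [EuclideanSpace.dist_eq, EuclideanSpace.dist_eq]
  gcongr with i
  have clamp_lipschitz : LipschitzWith 1 fun t : ℝ => max (a i) (min (b i) t) :=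
    (LipschitzWith.id.const_min (b i)).const_max (a i)
  exact (clamp_lipschitz.dist_le_mul (x i) (y i)).trans_eq (one_mul _)

namespace IsTangentToBox

theorem abs_apply_le_mul_abs_sub {c : ℝ≥0} (hg : IsTangentToBox a b g)
    (hgL : LipschitzOnWith c g (closedBox a b)) (hx : x ∈ closedBox a b) {i : ι} {t : ℝ}
    (ht : t = a i ∨ t = b i) : |g x i| ≤ c * |x i - t| := by
  classical
  -- `y` is the orthogonal projection of `x` onto the face through `t`.
  set y := x - EuclideanSpace.single i (x i - t) with hy
  have hyi : y i = t := by simp [hy]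
  have hybox : y ∈ closedBox a b := by
    intro j
    rcases eq_or_ne j i with rfl | hji
    · have hab := le_of_mem_closedBox hx j
      rw [hyi]
      rcases ht with rfl | rfl
      exacts [left_mem_Icc.2 hab, right_mem_Icc.2 hab]
    · simpa [hy, hji] using hx j
  calc |g x i| = ‖(g x - g y) i‖ := by
        rw [PiLp.sub_apply, hg i y hybox (hyi ▸ ht), sub_zero, Real.norm_eq_abs]
    _ ≤ ‖g x - g y‖ := PiLp.norm_apply_le _ i
    _ ≤ c * ‖x - y‖ := hgL.norm_sub_le hx hybox
    _ = c * |x i - t| := by rw [hy, sub_sub_cancel, PiLp.norm_single, Real.norm_eq_abs]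

theorem mapsTo_add_closedBox (hg : IsTangentToBox a b g)
    (hgL : LipschitzOnWith 1 g (closedBox a b)) :
    MapsTo (fun x => x + g x) (closedBox a b) (closedBox a b) := by
  intro x hx i
  have hleft := hg.abs_apply_le_mul_abs_sub hgL hx (i := i) (.inl rfl)
  have hright := hg.abs_apply_le_mul_abs_sub hgL hx (i := i) (.inr rfl)
  rw [NNReal.coe_one, one_mul, abs_le] at hleft hright
  rw [abs_of_nonneg (sub_nonneg.2 (hx i).1)] at hleft
  rw [abs_of_nonpos (sub_nonpos.2 (hx i).2)] at hright
  rw [PiLp.add_apply]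
  constructor <;> linarith

theorem bijOn_add_closedBox {c : ℝ≥0} (hg : IsTangentToBox a b g) (hc : c < 1)
    (hgL : LipschitzOnWith c g (closedBox a b)) :
    BijOn (fun x => x + g x) (closedBox a b) (closedBox a b) := by
  rcases (closedBox a b).eq_empty_or_nonempty with hempty | ⟨z, hz⟩
  · rw [hempty]
    exact bijOn_empty _
  have hab := le_of_mem_closedBox hz
  have hcontr : ContractingWith c (g ∘ boxClamp a b) := by
    refine ⟨hc, lipschitzOnWith_univ.1 ?_⟩
    simpa only [mul_one] using hgL.comp (lipschitzWith_boxClamp a b).lipschitzOnWith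
      fun x _ => boxClamp_mem_closedBox hab x
  have hbij := bijective_add_of_contractingWith hcontr
  have heq : EqOn (fun x => x + g (boxClamp a b x)) (fun x => x + g x) (closedBox a b) :=
    fun x hx => by simp only [boxClamp_eq_self hx]
  refine ⟨hg.mapsTo_add_closedBox (hgL.weaken hc.le), heq.injOn_iff.1 hbij.injective.injOn, ?_⟩
  intro y hy
  obtain ⟨x, rfl⟩ := hbij.surjective y
  have hx := hg.mem_closedBox_of_add_boxClamp_mem hy
  exact ⟨x, hx, (heq hx).symm⟩

end IsTangentToBox

theorem small_coefficients_give_bijections_general {κ : Type*} [Fintype κ] (a b : ι → ℝ)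
    (φ : κ → EuclideanSpace ℝ ι → EuclideanSpace ℝ ι)
    (hφ : ∀ m, LocallyLipschitzOn (closedBox a b) (φ m))
    (htan : ∀ m, IsTangentToBox a b (φ m)) :
    ∃ r : ℝ, 0 < r ∧ ∀ u : EuclideanSpace ℝ κ, ‖u‖ ≤ r →
      BijOn (fun x => x + ∑ m, u m • φ m x) (closedBox a b) (closedBox a b) := by
  choose L hL using fun m => (hφ m).exists_lipschitzOnWith_of_compact (isCompact_closedBox a b)
  set C : ℝ≥0 := ∑ m, L m with hC
  refine ⟨((C + 1)⁻¹ : ℝ≥0), by positivity, fun u hu => ?_⟩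
  have hLip : LipschitzOnWith (∑ m, ‖u m‖₊ * L m) (fun x => ∑ m, u m • φ m x) (closedBox a b) :=
    lipschitzOnWith_sum _ fun m _ => (lipschitzWith_smul (u m)).comp_lipschitzOnWith (hL m)
  refine (IsTangentToBox.sum_smul htan u).bijOn_add_closedBox ?_ hLip
  calc ∑ m, ‖u m‖₊ * L m ≤ ∑ m, ‖u‖₊ * L m := by
        gcongr with m
        exact PiLp.nnnorm_apply_le u m
    _ = ‖u‖₊ * C := by rw [hC, Finset.mul_sum]
    _ ≤ (C + 1)⁻¹ * C := by gcongr; exact_mod_cast hu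
    _ < 1 := by
        rw [inv_mul_lt_one₀ (by positivity)]
        exact lt_add_one C

end Box

/-- Let `Ω = (a₁,b₁) × (a₂,b₂)` be an open rectangle in `ℝ²` and let
`φ₁, …, φ_M : ℝ² → ℝ²` be finitely many vector fields, each continuously differentiable
on an open neighborhood of the closure of `Ω` and each satisfying the boundary condition
`φ ⬝ n = 0` on `∂Ω`.  Then there is `r > 0` such that for every coefficient vector
`a ∈ ℝ^M` with Euclidean norm `‖a‖₂ ≤ r`, the map `Φ_a = id + Σ_m a_m φ_m` is a
bijection from the closure of `Ω` onto itself. -/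
theorem small_coefficients_give_bijections
    (a₁ b₁ a₂ b₂ : ℝ) (hab₁ : a₁ < b₁) (hab₂ : a₂ < b₂)
    (Ω : Set (EuclideanSpace ℝ (Fin 2)))
    (hΩ : Ω = {x : EuclideanSpace ℝ (Fin 2) |
      x 0 ∈ Set.Ioo a₁ b₁ ∧ x 1 ∈ Set.Ioo a₂ b₂})
    (M : ℕ) (φ : Fin M → EuclideanSpace ℝ (Fin 2) → EuclideanSpace ℝ (Fin 2))
    (hφ : ∀ m : Fin M, ∃ U : Set (EuclideanSpace ℝ (Fin 2)),
      IsOpen U ∧ closure Ω ⊆ U ∧ ContDiffOn ℝ 1 (φ m) U)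
    (hbc₁ : ∀ m : Fin M, ∀ x ∈ closure Ω, (x 0 = a₁ ∨ x 0 = b₁) → φ m x 0 = 0)
    (hbc₂ : ∀ m : Fin M, ∀ x ∈ closure Ω, (x 1 = a₂ ∨ x 1 = b₂) → φ m x 1 = 0) :
    ∃ r : ℝ, 0 < r ∧ ∀ a : EuclideanSpace ℝ (Fin M), ‖a‖ ≤ r →
      Set.BijOn (fun x => x + ∑ m : Fin M, a m • φ m x) (closure Ω) (closure Ω) := by
  have hcl : closure Ω = closedBox ![a₁, a₂] ![b₁, b₂] := by
    rw [hΩ, ← closure_setOf_forall_mem_Ioo (Fin.forall_fin_two.2 ⟨hab₁.ne, hab₂.ne⟩)]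
    simp only [Fin.forall_fin_two, Matrix.cons_val_zero, Matrix.cons_val_one]
  rw [hcl] at hφ hbc₁ hbc₂ ⊢
  refine small_coefficients_give_bijections_general _ _ φ (fun m => ?_)
    fun m => Fin.forall_fin_two.2 ⟨hbc₁ m, hbc₂ m⟩
  obtain ⟨U, -, hU, hC1⟩ := hφ m
  exact (hC1.mono hU).locallyLipschitzOn (convex_closedBox _ _)
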